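/- arXiv:math/0105055 — 6 statements merged into one kernel-verified Lean document; each statement's English description precedes it below -/
import Mathlib

section
/- Let n ≥ 2 be a natural number and let λ, R₀ be real numbers, and let ν₀ > 0 and μ₀ > 0 be real numbers. Suppose that for every real number t one has ((n−1)/n)·λ² − R₀/4 − ν₀·t + n²·μ₀²·(λ² − R₀/4)·t² ≥ 0. Then λ² ≥ n·R₀/(4(n−1)) + 2·ν₀² / ( n·μ₀²·( R₀ + Real.sqrt( R₀² + ((n−1)/n)·(4ν₀/μ₀)² ) ) ). -/
theorem dirac_estimate_weyl (n : ℕ) (hn : 2 ≤ n) (lam R₀ ν₀ μ₀ : ℝ)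
    (hν : 0 < ν₀) (hμ : 0 < μ₀)
    (h : ∀ t : ℝ, ((n : ℝ) - 1) / n * lam ^ 2 - R₀ / 4 - ν₀ * t
      + (n : ℝ) ^ 2 * μ₀ ^ 2 * (lam ^ 2 - R₀ / 4) * t ^ 2 ≥ 0) :
    lam ^ 2 ≥ (n : ℝ) * R₀ / (4 * ((n : ℝ) - 1))
      + 2 * ν₀ ^ 2 / ((n : ℝ) * μ₀ ^ 2 *
        (R₀ + Real.sqrt (R₀ ^ 2 + ((n : ℝ) - 1) / n * (4 * ν₀ / μ₀) ^ 2))) := by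
  have hn2 : (2 : ℝ) ≤ n := by exact_mod_cast hn
  obtain ⟨N, hN⟩ : ∃ N : ℝ, N = n := ⟨_, rfl⟩
  rw [← hN] at h hn2 ⊢
  obtain ⟨m, hm⟩ : ∃ m : ℝ, m = N - 1 := ⟨_, rfl⟩
  have hm0 : 0 < m := by linarith
  have hN0 : 0 < N := by linarith
  obtain ⟨y, hy⟩ : ∃ y : ℝ, y = lam ^ 2 - N * R₀ / (4 * m) := ⟨_, rfl⟩
  obtain ⟨K, hK⟩ : ∃ K : ℝ, K = ν₀ ^ 2 / (N * μ₀ ^ 2) := ⟨_, rfl⟩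
  have hK0 : 0 < K := by rw [hK]; positivity
  have ea : (N - 1) / N * lam ^ 2 - R₀ / 4 = m / N * y := by
    rw [hy, ← hm]; field_simp
  have eb : lam ^ 2 - R₀ / 4 = y + R₀ / (4 * m) := by
    have : N = m + 1 := by linarith
    rw [hy, this]; field_simp; ring
  have eS : R₀ ^ 2 + (N - 1) / N * (4 * ν₀ / μ₀) ^ 2 = R₀ ^ 2 + 16 * m * K := by
    rw [hK, ← hm]; field_simp; ring
  rw [eS, ← hm]
  simp only [ea, eb] at h
  have hy0 : 0 ≤ y := by
    have h0 := h 0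
    have h1 : 0 ≤ m / N * y := by linarith
    exact (mul_nonneg_iff_of_pos_left (by positivity)).1 h1
  have hd : discrim (N ^ 2 * μ₀ ^ 2 * (y + R₀ / (4 * m))) (-ν₀) (m / N * y) ≤ 0 :=
    discrim_le_zero (fun t => by have := h t; nlinarith)
  have hq : K ≤ y * (4 * m * y + R₀) := by
    rw [hK, div_le_iff₀ (by positivity)]
    have e : 4 * (N ^ 2 * μ₀ ^ 2 * (y + R₀ / (4 * m))) * (m / N * y)
        = y * (4 * m * y + R₀) * (N * μ₀ ^ 2) := by field_simp
    unfold discrim at hd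
    rw [e] at hd
    linarith [neg_sq ν₀]
  have hmK : 0 < m * K := by positivity
  obtain ⟨S, hS⟩ : ∃ S : ℝ, S = Real.sqrt (R₀ ^ 2 + 16 * m * K) := ⟨_, rfl⟩
  have hS0 : 0 ≤ S := hS ▸ Real.sqrt_nonneg _
  have hS2 : S ^ 2 = R₀ ^ 2 + 16 * m * K := by
    rw [hS]; exact Real.sq_sqrt (by nlinarith [sq_nonneg R₀])
  rw [← hS]
  have habs : |R₀| < S := abs_lt_of_sq_lt_sq (by linarith) hS0
  have hRS : 0 < R₀ + S := by linarith [(abs_lt.1 habs).1]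
  have hmy : 0 ≤ m * y := by positivity
  have hmq : m * K ≤ m * (y * (4 * m * y + R₀)) := mul_le_mul_of_nonneg_left hq hm0.le
  have h8 : S - R₀ ≤ 8 * (m * y) := by
    by_contra hc
    push Not at hc
    have h1 : 0 < (S - R₀ - 8 * (m * y)) * (S + R₀ + 8 * (m * y)) :=
      mul_pos (by linarith) (by linarith)
    nlinarith
  have hz : 2 * ν₀ ^ 2 / (N * μ₀ ^ 2 * (R₀ + S)) = 2 * K / (R₀ + S) := by
    rw [hK]; field_simp
  have hf : 2 * K / (R₀ + S) ≤ y := by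
    rw [div_le_iff₀ hRS]
    have h1 := mul_le_mul_of_nonneg_right h8 hRS.le
    have h2 : m * (2 * K) ≤ m * (y * (R₀ + S)) := by nlinarith
    exact le_of_mul_le_mul_left h2 hm0
  rw [hz]
  linarith
end

section
/- Let n ≥ 2 be a natural number and let R₀ < 0, μ₀ > 0 and ν₀ be real numbers with ν₀ > (n/2)·|R₀|·μ₀. Then n·R₀/(4(n−1)) + 2·ν₀² / ( n·μ₀²·( R₀ + Real.sqrt( R₀² + ((n−1)/n)·(4ν₀/μ₀)² ) ) ) > 0. -/
theorem lower_bound_positive_of_negative_scalar (n : ℕ) (hn : 2 ≤ n)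
    (R₀ μ₀ ν₀ : ℝ) (hR : R₀ < 0) (hμ : 0 < μ₀)
    (hν : ν₀ > (n : ℝ) / 2 * |R₀| * μ₀) :
    (n : ℝ) * R₀ / (4 * ((n : ℝ) - 1))
      + 2 * ν₀ ^ 2 / ((n : ℝ) * μ₀ ^ 2 *
        (R₀ + Real.sqrt (R₀ ^ 2 + ((n : ℝ) - 1) / n * (4 * ν₀ / μ₀) ^ 2))) > 0 := by
  have hm : (2 : ℝ) ≤ n := by exact_mod_cast hn
  generalize (n : ℝ) = m at *
  have hm0 : 0 < m := by linarith
  have hm1 : 0 < m - 1 := by linarith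
  rw [abs_of_neg hR] at hν
  obtain ⟨t, rfl⟩ : ∃ t, ν₀ = t * μ₀ := ⟨ν₀ / μ₀, by field_simp⟩
  have ht : m / 2 * (-R₀) < t := lt_of_mul_lt_mul_right hν hμ.le
  have e : 4 * (t * μ₀) / μ₀ = 4 * t := by field_simp
  rw [e]
  have hnn : 0 ≤ R₀ ^ 2 + (m - 1) / m * (4 * t) ^ 2 := by positivity
  have hS2 := Real.sq_sqrt hnn
  have hS : (2 * m - 1) * (-R₀) < Real.sqrt (R₀ ^ 2 + (m - 1) / m * (4 * t) ^ 2) := by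
    apply Real.lt_sqrt_of_sq_lt
    have h1 : (m / 2 * (-R₀)) ^ 2 < t ^ 2 := by
      have : 0 ≤ m / 2 * (-R₀) := mul_nonneg (by linarith) (by linarith)
      gcongr
    have h2 : (m - 1) / m * 16 * (m / 2 * (-R₀)) ^ 2 < (m - 1) / m * 16 * t ^ 2 := by
      gcongr
    have h3 : (m - 1) / m * 16 * (m / 2 * (-R₀)) ^ 2 = 4 * (m - 1) * m * R₀ ^ 2 := by
      field_simp
      ring
    nlinarith
  generalize Real.sqrt (R₀ ^ 2 + (m - 1) / m * (4 * t) ^ 2) = S at *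
  have hp : 0 < R₀ + S := by nlinarith
  have h4 : m * (S ^ 2 - R₀ ^ 2) = 16 * (m - 1) * t ^ 2 := by
    rw [hS2]
    field_simp
    ring
  have h5 : 2 * (t * μ₀) ^ 2 / (m * μ₀ ^ 2 * (R₀ + S)) = (S - R₀) / (8 * (m - 1)) := by
    rw [div_eq_div_iff (by positivity) (by positivity)]
    linear_combination (-μ₀ ^ 2) * h4
  have h6 : m * R₀ / (4 * (m - 1)) + (S - R₀) / (8 * (m - 1))
      = (2 * m * R₀ + S - R₀) / (8 * (m - 1)) := by
    field_simp
    ring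
  rw [h5, h6]
  apply div_pos <;> linarith
end

section
/- Let n ≥ 4 be a natural number and let ρ ≥ 0, ν₀ ≥ 0, σ ≥ 0, κ and R ≤ 0 be real numbers. Suppose that ((n+2)/(n−2))·ρ² + R²/(n(n−1)) + 4·n·ν₀ > |R|·( κ + n²·(n(n−1)/2)·σ ). Then there exists a real number t > 0 such that (t/(4n))·( ((n+2)/(n−2))·ρ² + R²/(n(n−1)) ) + ν₀·t + (R/4)·( 1 + (κ/n)·t + ( (n/2)·(n(n−1)/2)·σ )²·t² ) > 0. -/
theorem no_harmonic_spinors_condition (n : ℕ) (hn : 4 ≤ n)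
    (ρ ν₀ σ κ R : ℝ) (hρ : 0 ≤ ρ) (hν : 0 ≤ ν₀) (hσ : 0 ≤ σ) (hR : R ≤ 0)
    (h : ((n : ℝ) + 2) / ((n : ℝ) - 2) * ρ ^ 2 + R ^ 2 / ((n : ℝ) * ((n : ℝ) - 1))
        + 4 * n * ν₀
      > |R| * (κ + (n : ℝ) ^ 2 * ((n : ℝ) * ((n : ℝ) - 1) / 2) * σ)) :
    ∃ t : ℝ, 0 < t ∧
      t / (4 * n) * (((n : ℝ) + 2) / ((n : ℝ) - 2) * ρ ^ 2
          + R ^ 2 / ((n : ℝ) * ((n : ℝ) - 1)))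
        + ν₀ * t
        + R / 4 * (1 + κ / n * t
          + ((n : ℝ) / 2 * ((n : ℝ) * ((n : ℝ) - 1) / 2) * σ) ^ 2 * t ^ 2) > 0 := by
  have hn0 : (0 : ℝ) < n := by
    have : 0 < n := by omega
    exact_mod_cast this
  have hn4 : (4 : ℝ) ≤ n := by exact_mod_cast hn
  rw [abs_of_nonpos hR] at h
  generalize ((n : ℝ) + 2) / ((n : ℝ) - 2) * ρ ^ 2
    + R ^ 2 / ((n : ℝ) * ((n : ℝ) - 1)) = A at h ⊢
  obtain ⟨s, hs⟩ : ∃ s : ℝ, s = (n : ℝ) / 2 * ((n : ℝ) * ((n : ℝ) - 1) / 2) * σ := ⟨_, rfl⟩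
  have hs0 : 0 ≤ s := by
    have : (0 : ℝ) ≤ (n : ℝ) - 1 := by linarith
    rw [hs]; positivity
  rw [← hs]
  obtain ⟨D, hD⟩ : ∃ D : ℝ, D = A + 4 * n * ν₀ + R * κ := ⟨_, rfl⟩
  have hDs : D > -R * (2 * n * s) := by
    rw [hD, hs]; nlinarith [h]
  have key : ∀ t : ℝ, t / (4 * n) * A + ν₀ * t + R / 4 * (1 + κ / n * t + s ^ 2 * t ^ 2)
      = (t * D + n * R * (1 + s ^ 2 * t ^ 2)) / (4 * n) := by
    intro t
    rw [hD]
    field_simp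
    ring
  simp only [key]
  rcases hs0.eq_or_lt with h0 | hpos
  · subst h0
    have hD0 : 0 < D := by simpa using hDs
    have hnR : (n : ℝ) * R ≤ 0 := mul_nonpos_of_nonneg_of_nonpos hn0.le hR
    refine ⟨(1 - n * R) / D, div_pos (by linarith) hD0, ?_⟩
    apply div_pos _ (by positivity)
    rw [div_mul_cancel₀ _ hD0.ne']
    norm_num
  · refine ⟨1 / s, by positivity, ?_⟩
    apply div_pos _ (by positivity)
    have e : 1 / s * D + n * R * (1 + s ^ 2 * (1 / s) ^ 2) = (D + 2 * n * R * s) / s := by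
      field_simp
      ring
    rw [e]
    exact div_pos (by linarith) hpos
end

section
/- Let n ≥ 4 be a natural number, let Q be the quadratic form Q(x) = −Σᵢ xᵢ² on ℝⁿ (equivalently on EuclideanSpace ℝ (Fin n)), and in the Clifford algebra CliffordAlgebra Q write e i for the image of the i-th standard basis vector, so that (e i)² = −1 and e i · e j = −e j · e i for i ≠ j. Let W : Fin n → Fin n → Fin n → Fin n → ℝ be antisymmetric in its first two arguments (W i j k l = −W j i k l) and in its last two arguments (W i j k l = −W i j l k), and symmetric under interchange of the two pairs (W i j k l = W k l i j). Define H := −(1/16)·Σ_{k,l,α,β,γ,δ ∈ Fin n} (W k l α β)·(W k l γ δ) · e α · e β · e γ · e δ ∈ CliffordAlgebra Q, and |W|² := Σ_{k,l,α,β} (W k l α β)². Then H = (1/8)·|W|²·1 + H₄, where H₄ := −(1/2)·Σ_{k,l ∈ Fin n} Σ_{α<β<γ<δ} ( (W k l α β)·(W k l γ δ) − (W k l α γ)·(W k l β δ) + (W k l α δ)·(W k l β γ) ) · e α · e β · e γ · e δ. -/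
/-- The image of the `i`-th standard basis vector in the Clifford algebra of `Q`. -/
noncomputable def cliffordBasis {n : ℕ} (Q : QuadraticForm ℝ (Fin n → ℝ)) (i : Fin n) :
    CliffordAlgebra Q :=
  CliffordAlgebra.ι Q (Pi.single i 1)

section WeylHelpers

open Finset

variable {R : Type*} [Ring R] [Algebra ℝ R]

/-- vector -/
def wV (e : ℕ → R) (v : ℕ → ℝ) (n : ℕ) : R := ∑ a ∈ range n, v a • e a

/-- bivector -/
def wB (e : ℕ → R) (A : ℕ → ℕ → ℝ) (n : ℕ) : R :=
  ∑ a ∈ range n, ∑ b ∈ range n, A a b • (e a * e b)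

theorem wV_succ (e : ℕ → R) (v : ℕ → ℝ) (n : ℕ) : wV e v (n+1) = wV e v n + v n • e n := by
  simp [wV, sum_range_succ]

theorem wV_anti (e : ℕ → R) (he : ∀ i j, i ≠ j → e i * e j = -(e j * e i)) (v : ℕ → ℝ) (n m : ℕ)
    (h : n ≤ m) : e m * wV e v n = -(wV e v n * e m) := by
  simp only [wV, mul_sum, sum_mul, ← sum_neg_distrib]
  refine sum_congr rfl fun a ha => ?_
  have : a < n := by simpa using ha
  rw [mul_smul_comm, he m a (by omega), smul_mul_assoc, smul_neg]

theorem wB_comm (e : ℕ → R) (he : ∀ i j, i ≠ j → e i * e j = -(e j * e i)) (A : ℕ → ℕ → ℝ)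
    (n m : ℕ) (h : n ≤ m) : e m * wB e A n = wB e A n * e m := by
  simp only [wB, mul_sum, sum_mul]
  refine sum_congr rfl fun a ha => sum_congr rfl fun b hb => ?_
  have h1 : a < n := by simpa using ha
  have h2 : b < n := by simpa using hb
  rw [mul_smul_comm, ← mul_assoc, he m a (by omega), neg_mul, mul_assoc, he m b (by omega),
    smul_mul_assoc]
  simp [mul_assoc]

theorem wB_succ (e : ℕ → R) (he : ∀ i j, i ≠ j → e i * e j = -(e j * e i)) (A : ℕ → ℕ → ℝ)
    (hA : ∀ i j, A i j = -A j i) (n : ℕ) :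
    wB e A (n+1) = wB e A n + (2:ℝ) • (wV e (fun a => A a n) n * e n) := by
  have h0 : A n n = 0 := by linarith [hA n n]
  have h1 : ∑ b ∈ range n, A n b • (e n * e b) = wV e (fun a => A a n) n * e n := by
    simp only [wV, sum_mul]
    refine sum_congr rfl fun a ha => ?_
    have : a < n := by simpa using ha
    rw [he n a (by omega), hA n a, smul_mul_assoc]; simp
  have h2 : ∑ a ∈ range n, A a n • (e a * e n) = wV e (fun a => A a n) n * e n := by
    simp only [wV, sum_mul, smul_mul_assoc]
  simp only [wB, sum_range_succ, sum_add_distrib, h0, h1, h2]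
  module

theorem wB_eq (e : ℕ → R) (he : ∀ i j, i ≠ j → e i * e j = -(e j * e i)) (A : ℕ → ℕ → ℝ)
    (hA : ∀ i j, A i j = -A j i) (n : ℕ) :
    wB e A n = (2:ℝ) • ∑ b ∈ range n, ∑ a ∈ range b, A a b • (e a * e b) := by
  induction n with
  | zero => simp [wB]
  | succ n ih =>
    rw [wB_succ e he A hA, ih, sum_range_succ, smul_add]
    simp only [wV, sum_mul, smul_mul_assoc]

theorem wV_comm (e : ℕ → R) (he : ∀ i j, i ≠ j → e i * e j = -(e j * e i)) (v u : ℕ → ℝ) (n : ℕ) :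
    wV e v n * wV e u n - wV e u n * wV e v n
      = (2:ℝ) • ∑ b ∈ range n, ∑ a ∈ range b, (v a * u b - v b * u a) • (e a * e b) := by
  induction n with
  | zero => simp [wV]
  | succ n ih =>
    have h : ∑ a ∈ range n, (v a * u n - v n * u a) • (e a * e n)
        = u n • (wV e v n * e n) - v n • (wV e u n * e n) := by
      simp only [wV, sum_mul, smul_sum, ← sum_sub_distrib, smul_mul_assoc]
      refine sum_congr rfl fun a _ => ?_
      module
    rw [sum_range_succ, smul_add, ← ih, h, wV_succ, wV_succ]
    have hv := wV_anti e he v n n le_rfl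
    have hu := wV_anti e he u n n le_rfl
    simp only [mul_add, add_mul, smul_mul_assoc, mul_smul_comm, hv, hu]
    module

theorem wV_sq (e : ℕ → R) (he : ∀ i j, i ≠ j → e i * e j = -(e j * e i)) (v : ℕ → ℝ) (n : ℕ)
    (hs : ∀ i < n, e i * e i = -1) :
    wV e v n * wV e v n = (-∑ a ∈ range n, v a ^ 2) • (1 : R) := by
  induction n with
  | zero => simp [wV]
  | succ n ih =>
    have hv := wV_anti e he v n n le_rfl
    rw [sum_range_succ, wV_succ]
    simp only [mul_add, add_mul, smul_mul_assoc, mul_smul_comm, hv, hs n (by omega),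
      ih (fun i hi => hs i (by omega))]
    module

theorem wBV (e : ℕ → R) (he : ∀ i j, i ≠ j → e i * e j = -(e j * e i)) (A : ℕ → ℕ → ℝ)
    (hA : ∀ i j, A i j = -A j i) (v : ℕ → ℝ) (n : ℕ) :
    wB e A n * wV e v n + wV e v n * wB e A n
      = (4:ℝ) • ∑ c ∈ range n, ∑ b ∈ range c, ∑ a ∈ range b,
        (A a b * v c - A a c * v b + A b c * v a) • (e a * e b * e c) := by
  induction n with
  | zero => simp [wV]
  | succ n ih =>
    have h : (4:ℝ) • ∑ b ∈ range n, ∑ a ∈ range b,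
        (A a b * v n - A a n * v b + A b n * v a) • (e a * e b * e n)
        = (2 * v n) • (wB e A n * e n) + (2:ℝ) • ((wV e v n * wV e (fun a => A a n) n
          - wV e (fun a => A a n) n * wV e v n) * e n) := by
      rw [wB_eq e he A hA, wV_comm e he]
      simp only [sum_mul, smul_sum, ← sum_add_distrib, smul_mul_assoc]
      refine sum_congr rfl fun b _ => sum_congr rfl fun a _ => ?_
      module
    rw [sum_range_succ, smul_add, ← ih, h, wV_succ, wB_succ e he A hA]
    have hv := wV_anti e he v n n le_rfl
    have hu := wV_anti e he (fun a => A a n) n n le_rfl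
    have hu' : ∀ y, e n * (wV e (fun a => A a n) n * y) = -(wV e (fun a => A a n) n * (e n * y)) := by
      intro y; rw [← mul_assoc, hu]; simp [mul_assoc]
    have hB := wB_comm e he A n n le_rfl
    simp only [mul_add, add_mul, sub_mul, smul_mul_assoc, mul_smul_comm, mul_assoc, hv, hu, hu', hB,
      mul_neg]
    module

theorem wBB (e : ℕ → R) (he : ∀ i j, i ≠ j → e i * e j = -(e j * e i)) (A : ℕ → ℕ → ℝ)
    (hA : ∀ i j, A i j = -A j i) (n : ℕ) (hs : ∀ i < n, e i * e i = -1) :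
    wB e A n * wB e A n
      = (-2 * ∑ a ∈ range n, ∑ b ∈ range n, A a b ^ 2) • (1 : R)
       + (8:ℝ) • ∑ d ∈ range n, ∑ c ∈ range d, ∑ b ∈ range c, ∑ a ∈ range b,
        (A a b * A c d - A a c * A b d + A a d * A b c) • (e a * e b * e c * e d) := by
  induction n with
  | zero => simp [wB]
  | succ n ih =>
    have h : (8:ℝ) • ∑ c ∈ range n, ∑ b ∈ range c, ∑ a ∈ range b,
        (A a b * A c n - A a c * A b n + A a n * A b c) • (e a * e b * e c * e n)
        = (2:ℝ) • ((wB e A n * wV e (fun a => A a n) n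
          + wV e (fun a => A a n) n * wB e A n) * e n) := by
      rw [wBV e he A hA]
      simp only [sum_mul, smul_sum, smul_mul_assoc]
      refine sum_congr rfl fun c _ => sum_congr rfl fun b _ => sum_congr rfl fun a _ => ?_
      module
    have h0 : A n n = 0 := by linarith [hA n n]
    have hq : ∑ a ∈ range (n+1), ∑ b ∈ range (n+1), A a b ^ 2
        = ∑ a ∈ range n, ∑ b ∈ range n, A a b ^ 2 + 2 * ∑ a ∈ range n, A a n ^ 2 := by
      have : ∑ b ∈ range n, A n b ^ 2 = ∑ a ∈ range n, A a n ^ 2 :=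
        sum_congr rfl fun a _ => by rw [hA n a]; ring
      simp only [sum_range_succ, sum_add_distrib, h0, this]
      ring
    have ih' := ih (fun i hi => hs i (by omega))
    rw [hq, sum_range_succ _ n, smul_add, h, wB_succ e he A hA]
    have hu := wV_anti e he (fun a => A a n) n n le_rfl
    have hu' : ∀ y, e n * (wV e (fun a => A a n) n * y) = -(wV e (fun a => A a n) n * (e n * y)) := by
      intro y; rw [← mul_assoc, hu]; simp [mul_assoc]
    have hB := wB_comm e he A n n le_rfl
    have hV := wV_sq e he (fun a => A a n) n (fun i hi => hs i (by omega))
    simp only [mul_add, add_mul, smul_mul_assoc, mul_smul_comm, mul_assoc, hu', hB,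
      mul_neg, hs n (by omega), mul_one, neg_neg, hV]
    rw [ih']
    simp only [mul_assoc]
    module

theorem wRange (n : ℕ) (F : ℕ → ℕ → ℕ → ℕ → R) :
    ∑ d ∈ range n, ∑ c ∈ range d, ∑ b ∈ range c, ∑ a ∈ range b, F a b c d
      = ∑ α : Fin n, ∑ β ∈ Ioi α, ∑ γ ∈ Ioi β, ∑ δ ∈ Ioi γ, F α β γ δ := by
  symm
  simp only [sum_sigma']
  refine sum_nbij (fun p => ⟨p.2.2.2, p.2.2.1, p.2.1, p.1⟩) ?_ ?_ ?_ ?_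
  · rintro ⟨a, b, c, d⟩ h
    simp only [mem_sigma, mem_Ioi, mem_univ, true_and, mem_range, Fin.lt_def] at h ⊢
    exact ⟨d.2, h.2.2, h.2.1, h.1⟩
  · rintro ⟨a, b, c, d⟩ _ ⟨a', b', c', d'⟩ _ h
    simp only [Sigma.mk.injEq, heq_eq_eq, Fin.val_inj] at h ⊢
    tauto
  · rintro ⟨d, c, b, a⟩ h
    simp only [coe_sigma, Set.mem_sigma_iff, mem_coe, mem_range] at h
    obtain ⟨h1, h2, h3, h4⟩ := h
    refine ⟨⟨⟨a, by omega⟩, ⟨b, by omega⟩, ⟨c, by omega⟩, ⟨d, by omega⟩⟩, ?_, rfl⟩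
    simp [h2, h3, h4]
  · intro p _
    rfl

theorem wFin (n : ℕ) (e : Fin n → R) (he : ∀ i j, i ≠ j → e i * e j = -(e j * e i))
    (hs : ∀ i, e i * e i = -1) (A : Fin n → Fin n → ℝ) (hA : ∀ i j, A i j = -A j i) :
    ∑ a, ∑ b, ∑ c, ∑ d, (A a b * A c d) • (e a * e b * e c * e d)
      = (-2 * ∑ a, ∑ b, A a b ^ 2) • (1 : R)
       + (8:ℝ) • ∑ a, ∑ b ∈ Ioi a, ∑ c ∈ Ioi b, ∑ d ∈ Ioi c,
        (A a b * A c d - A a c * A b d + A a d * A b c) • (e a * e b * e c * e d) := by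
  have key := wBB (fun i => if h : i < n then e ⟨i, h⟩ else 0) (by
      intro i j hij
      by_cases hi : i < n <;> by_cases hj : j < n <;> simp [hi, hj]
      exact he _ _ (by simpa using hij))
    (fun i j => if h : i < n ∧ j < n then A ⟨i, h.1⟩ ⟨j, h.2⟩ else 0) (by
      intro i j
      by_cases hi : i < n <;> by_cases hj : j < n <;> simp [hi, hj]
      exact hA _ _) n (by intro i hi; simp [hi, hs])
  rw [wRange n (fun a b c d => _)] at key
  simp only [wB, sum_range, Fin.is_lt, and_self, dite_true, Fin.eta] at key
  rw [← key]
  simp only [sum_mul]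
  simp only [mul_sum]
  refine sum_congr rfl fun a _ => sum_congr rfl fun b _ => sum_congr rfl fun c _ =>
    sum_congr rfl fun d _ => ?_
  rw [smul_mul_smul_comm]
  simp only [mul_assoc]

end WeylHelpers

theorem weyl_endomorphism_decomposition (n : ℕ) (hn : 4 ≤ n)
    (Q : QuadraticForm ℝ (Fin n → ℝ)) (hQ : ∀ x, Q x = -∑ i, x i ^ 2)
    (W : Fin n → Fin n → Fin n → Fin n → ℝ)
    (h1 : ∀ i j k l, W i j k l = -W j i k l)
    (h2 : ∀ i j k l, W i j k l = -W i j l k)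
    (h3 : ∀ i j k l, W i j k l = W k l i j) :
    (-(1 / 16 : ℝ)) • (∑ k, ∑ l, ∑ α, ∑ β, ∑ γ, ∑ δ,
        (W k l α β * W k l γ δ) •
          (cliffordBasis Q α * cliffordBasis Q β * cliffordBasis Q γ * cliffordBasis Q δ))
      = ((1 / 8 : ℝ) * ∑ k, ∑ l, ∑ α, ∑ β, (W k l α β) ^ 2) • (1 : CliffordAlgebra Q)
        + (-(1 / 2 : ℝ)) • (∑ k, ∑ l, ∑ α, ∑ β ∈ Finset.Ioi α, ∑ γ ∈ Finset.Ioi β,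
            ∑ δ ∈ Finset.Ioi γ,
            (W k l α β * W k l γ δ - W k l α γ * W k l β δ + W k l α δ * W k l β γ) •
              (cliffordBasis Q α * cliffordBasis Q β * cliffordBasis Q γ *
                cliffordBasis Q δ)) := by
  have hs : ∀ i, cliffordBasis Q i * cliffordBasis Q i = -1 := by
    intro i
    rw [cliffordBasis, CliffordAlgebra.ι_sq_scalar, hQ]
    simp [Pi.single_apply]
  have he : ∀ i j, i ≠ j →
      cliffordBasis Q i * cliffordBasis Q j = -(cliffordBasis Q j * cliffordBasis Q i) := by
    intro i j hij
    rw [eq_neg_iff_add_eq_zero, cliffordBasis, cliffordBasis,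
      CliffordAlgebra.ι_mul_ι_add_swap, QuadraticMap.polar, hQ, hQ, hQ]
    have : ∑ x, (Pi.single i (1:ℝ) + Pi.single j (1:ℝ) : Fin n → ℝ) x ^ 2 = 2 := by
      have : ∀ x, (Pi.single i (1:ℝ) + Pi.single j (1:ℝ) : Fin n → ℝ) x ^ 2
          = (if x = i then 1 else 0) + (if x = j then 1 else 0) := by
        intro x
        by_cases hx : x = i
        · subst hx; simp [hij]
        · by_cases hy : x = j
          · subst hy; simp [hx]
          · simp [hx, hy]
      simp only [this, Finset.sum_add_distrib]
      norm_num
    have h1' : ∀ i : Fin n, ∑ x, (Pi.single i (1:ℝ) : Fin n → ℝ) x ^ 2 = 1 := by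
      intro i
      simp [Pi.single_apply]
    rw [this, h1', h1']
    norm_num
  have hk := fun k l => wFin n (cliffordBasis Q) he hs (W k l) (h2 k l)
  simp only [hk, Finset.sum_add_distrib, ← Finset.sum_smul, ← Finset.smul_sum, ← Finset.mul_sum]
  module
end

section
/- Let n ≥ 4 be a natural number, let Q be the quadratic form Q(x) = −Σᵢ xᵢ² on ℝⁿ, and in the Clifford algebra CliffordAlgebra Q write e i for the image of the i-th standard basis vector, so that (e i)² = −1 and e i · e j = −e j · e i for i ≠ j. Let W : Fin n → Fin n → Fin n → Fin n → ℝ be antisymmetric in its first two arguments and in its last two arguments and symmetric under interchange of the two pairs. Suppose that for all α, β, γ, δ ∈ Fin n: Σ_{k,l} ( (W k l α β)·(W k l γ δ) + (W k l α γ)·(W k l δ β) + (W k l α δ)·(W k l β γ) ) = 0. Then H := −(1/16)·Σ_{k,l,α,β,γ,δ} (W k l α β)·(W k l γ δ) · e α · e β · e γ · e δ equals the scalar (1/8)·( Σ_{k,l,α,β} (W k l α β)² )·1 in CliffordAlgebra Q. -/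
theorem aux_curv {n : ℕ} {A : Type*} [Ring A] [Algebra ℝ A] (e : Fin n → A)
    (he : ∀ i j, e i * e j = (if i = j then (-2 : ℝ) else 0) • (1 : A) - e j * e i)
    (T : Fin n → Fin n → Fin n → Fin n → ℝ)
    (h2 : ∀ a b c d, T a b c d = -T a b d c)
    (h3 : ∀ a b c d, T a b c d = T c d a b)
    (hc : ∀ a b c d, T a b c d + T a c d b + T a d b c = 0) :
    ∑ a, ∑ b, ∑ c, ∑ d, T a b c d • (e a * e b * e c * e d)
      = (-2 * ∑ a, ∑ b, T a b a b) • (1 : A) := by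
  set S := ∑ a, ∑ b, ∑ c, ∑ d, T a b c d • (e a * e b * e c * e d) with hS
  set P := ∑ a, ∑ b, ∑ c, T a b c b • (e a * e c) with hP
  have hz : ∀ a b c, T a b c c = 0 := fun a b c => by have := h2 a b c c; linarith
  have key1 : ∀ a b c d, T a b c d • (e a * e d * e b * e c) =
      T a b c d • (e a * e b * e c * e d)
       + (if d = b then (-2 : ℝ) * T a b c d else 0) • (e a * e c) := by
    intro a b c d
    have h : e a * e d * e b * e c = e a * e b * e c * e d
        + (if d = b then (-2 : ℝ) else 0) • (e a * e c)
        - (if d = c then (-2 : ℝ) else 0) • (e a * e b) := by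
      rw [mul_assoc (e a) (e d), he d b, mul_sub, sub_mul, ← mul_assoc, mul_assoc (e a * e b), he d c]
      simp only [mul_sub, mul_smul_comm, smul_mul_assoc, mul_one, mul_assoc]
      abel
    rw [h]
    by_cases hdc : d = c
    · subst hdc; simp [hz]
    · by_cases hdb : d = b
      · rw [if_neg hdc, if_pos hdb, if_pos hdb]
        module
      · simp [hdc, hdb]
  have key2 : ∀ a b c d, T a b c d • (e a * e c * e d * e b) =
      T a b c d • (e a * e b * e c * e d)
       + (if d = b then (-2 : ℝ) * T a b c d else 0) • (e a * e c)
       - (if c = b then (-2 : ℝ) * T a b c d else 0) • (e a * e d) := by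
    intro a b c d
    have h : e a * e c * e d * e b = e a * e b * e c * e d
        + (if d = b then (-2 : ℝ) else 0) • (e a * e c)
        - (if c = b then (-2 : ℝ) else 0) • (e a * e d) := by
      rw [mul_assoc (e a * e c), he d b, mul_sub, ← mul_assoc, mul_assoc (e a) (e c) (e b), he c b]
      simp only [mul_sub, sub_mul, mul_smul_comm, smul_mul_assoc, mul_one, mul_assoc]
      abel
    rw [h]
    by_cases hdc : c = b <;> by_cases hdb : d = b <;>
      simp only [hdc, hdb, if_true, if_false, smul_add, smul_sub, smul_smul, zero_smul, smul_zero, mul_comm (-2 : ℝ)]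
  have sP1 : ∑ a, ∑ b, ∑ c, ∑ d, (if d = b then (-2 : ℝ) * T a b c d else 0) • (e a * e c)
      = (-2 : ℝ) • P := by
    simp only [ite_smul, zero_smul, Finset.sum_ite_eq', Finset.mem_univ, if_true, hP, Finset.smul_sum, smul_smul]
  have sP2 : ∑ a, ∑ b, ∑ c, ∑ d, (if c = b then (-2 : ℝ) * T a b c d else 0) • (e a * e d)
      = (2 : ℝ) • P := by
    simp only [hP, Finset.smul_sum, smul_smul]
    refine Finset.sum_congr rfl fun a _ => Finset.sum_congr rfl fun b _ => ?_
    rw [Finset.sum_comm]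
    refine Finset.sum_congr rfl fun d _ => ?_
    simp only [ite_smul, zero_smul, Finset.sum_ite_eq', Finset.mem_univ, if_true]
    rw [h2 a b b d]; congr 1; ring
  have t1 : ∑ a, ∑ b, ∑ c, ∑ d, T a b c d • (e a * e d * e b * e c) = S + (-2 : ℝ) • P := by
    simp only [key1, Finset.sum_add_distrib, sP1, hS]
  have t2 : ∑ a, ∑ b, ∑ c, ∑ d, T a b c d • (e a * e c * e d * e b)
      = S + (-2 : ℝ) • P - (2 : ℝ) • P := by
    simp only [key2, Finset.sum_add_distrib, Finset.sum_sub_distrib, sP1, sP2, hS]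
  have r1 : ∑ a, ∑ b, ∑ c, ∑ d, T a c d b • (e a * e b * e c * e d)
      = ∑ a, ∑ b, ∑ c, ∑ d, T a b c d • (e a * e d * e b * e c) := by
    refine Finset.sum_congr rfl fun a _ => ?_
    rw [Finset.sum_comm]
    refine Finset.sum_congr rfl fun b _ => ?_
    rw [Finset.sum_comm]
  have r2 : ∑ a, ∑ b, ∑ c, ∑ d, T a d b c • (e a * e b * e c * e d)
      = ∑ a, ∑ b, ∑ c, ∑ d, T a b c d • (e a * e c * e d * e b) := by
    refine Finset.sum_congr rfl fun a _ => ?_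
    symm
    rw [Finset.sum_comm]
    refine Finset.sum_congr rfl fun b _ => ?_
    rw [Finset.sum_comm]
  have tot : S + (S + (-2 : ℝ) • P) + (S + (-2 : ℝ) • P - (2 : ℝ) • P) = 0 := by
    rw [← t2, ← t1, ← r1, ← r2, hS]
    simp only [← Finset.sum_add_distrib, ← add_smul, hc, zero_smul, Finset.sum_const_zero]
  have hPs : P = ∑ a, ∑ b, ∑ c, T a b c b • (e c * e a) := by
    rw [hP, Finset.sum_comm]
    conv_rhs => rw [Finset.sum_comm]
    refine Finset.sum_congr rfl fun b _ => ?_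
    rw [Finset.sum_comm]
    refine Finset.sum_congr rfl fun c _ => Finset.sum_congr rfl fun a _ => ?_
    rw [h3]
  have hPP : P + P = (-2 * ∑ a, ∑ b, T a b a b) • (1 : A) := by
    nth_rewrite 2 [hPs]
    rw [hP]
    simp only [← Finset.sum_add_distrib, ← smul_add, Finset.mul_sum, Finset.sum_smul]
    refine Finset.sum_congr rfl fun a _ => Finset.sum_congr rfl fun b _ => ?_
    have : ∀ c, e a * e c + e c * e a = (if a = c then (-2 : ℝ) else 0) • (1 : A) := by
      intro c; rw [he a c]; abel
    simp only [this, smul_smul, mul_ite, mul_zero]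
    simp only [ite_smul, zero_smul, Finset.sum_ite_eq, Finset.mem_univ, if_true, mul_comm]
  rw [← hPP]
  have h3S : (3 : ℝ) • (S - (P + P)) = 0 := by rw [← tot]; module
  have := (smul_eq_zero.mp h3S).resolve_left (by norm_num)
  exact sub_eq_zero.mp this

theorem weyl_endomorphism_scalar (n : ℕ) (hn : 4 ≤ n)
    (Q : QuadraticForm ℝ (Fin n → ℝ)) (hQ : ∀ x, Q x = -∑ i, x i ^ 2)
    (W : Fin n → Fin n → Fin n → Fin n → ℝ)
    (h1 : ∀ i j k l, W i j k l = -W j i k l)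
    (h2 : ∀ i j k l, W i j k l = -W i j l k)
    (h3 : ∀ i j k l, W i j k l = W k l i j)
    (hcyclic : ∀ α β γ δ : Fin n,
      ∑ k, ∑ l, (W k l α β * W k l γ δ + W k l α γ * W k l δ β + W k l α δ * W k l β γ) = 0) :
    (-(1 / 16 : ℝ)) • (∑ k, ∑ l, ∑ α, ∑ β, ∑ γ, ∑ δ,
        (W k l α β * W k l γ δ) •
          (cliffordBasis Q α * cliffordBasis Q β * cliffordBasis Q γ * cliffordBasis Q δ))
      = ((1 / 8 : ℝ) * ∑ k, ∑ l, ∑ α, ∑ β, (W k l α β) ^ 2) •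
          (1 : CliffordAlgebra Q) := by
  have he : ∀ i j, cliffordBasis Q i * cliffordBasis Q j =
      (if i = j then (-2 : ℝ) else 0) • (1 : CliffordAlgebra Q)
        - cliffordBasis Q j * cliffordBasis Q i := by
    intro i j
    rw [eq_sub_iff_add_eq]
    unfold cliffordBasis
    rw [CliffordAlgebra.ι_mul_ι_add_swap, Algebra.algebraMap_eq_smul_one]
    congr 1
    simp only [QuadraticMap.polar, hQ, Pi.add_apply, add_sq, Finset.sum_add_distrib]
    have : ∑ x, 2 * (Pi.single i 1 : Fin n → ℝ) x * (Pi.single j 1 : Fin n → ℝ) x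
        = if i = j then 2 else 0 := by
      simp [Pi.single_apply, eq_comm]
    rw [this]
    split_ifs <;> ring
  have main := aux_curv (cliffordBasis Q) he
    (fun a b c d => ∑ k, ∑ l, W k l a b * W k l c d)
    (fun a b c d => by
      simp only [← Finset.sum_neg_distrib]
      refine Finset.sum_congr rfl fun k _ => Finset.sum_congr rfl fun l _ => ?_
      rw [h2 k l c d]; ring)
    (fun a b c d => by
      refine Finset.sum_congr rfl fun k _ => Finset.sum_congr rfl fun l _ => ?_
      ring)
    (fun a b c d => by
      simpa only [Finset.sum_add_distrib] using hcyclic a b c d)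
  have swap : ∀ {M : Type} [AddCommMonoid M] (f : Fin n → Fin n → Fin n → Fin n → M),
      ∑ k, ∑ l, ∑ a, ∑ b, f k l a b = ∑ a, ∑ b, ∑ k, ∑ l, f k l a b := by
    intro M _ f
    calc ∑ k, ∑ l, ∑ a, ∑ b, f k l a b = ∑ k, ∑ a, ∑ b, ∑ l, f k l a b := by
          refine Finset.sum_congr rfl fun k _ => ?_
          rw [Finset.sum_comm]
          exact Finset.sum_congr rfl fun a _ => Finset.sum_comm
      _ = ∑ a, ∑ b, ∑ k, ∑ l, f k l a b := by
          rw [Finset.sum_comm]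
          exact Finset.sum_congr rfl fun a _ => Finset.sum_comm
  have L : (∑ k, ∑ l, ∑ α, ∑ β, ∑ γ, ∑ δ,
        (W k l α β * W k l γ δ) •
          (cliffordBasis Q α * cliffordBasis Q β * cliffordBasis Q γ * cliffordBasis Q δ))
      = ∑ a, ∑ b, ∑ c, ∑ d, (∑ k, ∑ l, W k l a b * W k l c d) •
          (cliffordBasis Q a * cliffordBasis Q b * cliffordBasis Q c * cliffordBasis Q d) := by
    rw [swap]
    refine Finset.sum_congr rfl fun a _ => Finset.sum_congr rfl fun b _ => ?_
    rw [swap]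
    simp only [Finset.sum_smul]
  rw [L, main, smul_smul]
  congr 1
  rw [swap]
  simp only [pow_two]
  ring
end

section
/- Let n ≥ 4 be a natural number, let Q be the quadratic form Q(x) = −Σᵢ xᵢ² on ℝⁿ, and in the Clifford algebra CliffordAlgebra Q write e i for the image of the i-th standard basis vector. Let W : Fin n → Fin n → Fin n → Fin n → ℝ be antisymmetric in its first two arguments and in its last two arguments, symmetric under interchange of the two pairs, satisfying the first Bianchi identity W i j k l + W i k l j + W i l j k = 0, and totally trace-free: Σ_k W k i k j = 0 for all i, j. Then for every j ∈ Fin n, both Σ_{i,k,m ∈ Fin n} (W i j k m) · e i · e k · e m = 0 and Σ_{i,k,m ∈ Fin n} (W i j k m) · e k · e m · e i = 0 hold in CliffordAlgebra Q. -/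
theorem weyl_aux {n : ℕ} {R : Type*} [Ring R] [Algebra ℝ R] (e : Fin n → R)
    (he : ∀ i k, e i * e k = -(e k * e i) - (if i = k then (2:ℝ) else 0) • (1:R))
    (V : Fin n → Fin n → Fin n → ℝ)
    (ha : ∀ i k m, V i k m = -V i m k)
    (hb : ∀ i k m, V i k m + V k m i + V m i k = 0)
    (ht : ∀ m, ∑ k, V k k m = 0) :
    (∑ i, ∑ k, ∑ m, V i k m • (e i * e k * e m)) = 0
      ∧ (∑ i, ∑ k, ∑ m, V i k m • (e k * e m * e i)) = 0 := by
  have ht2 : ∀ m, ∑ k, V k m k = 0 := by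
    intro m
    rw [← neg_eq_zero, ← ht m, ← Finset.sum_neg_distrib]
    exact Finset.sum_congr rfl fun k _ => (ha k k m).symm
  have hA : (∑ i, ∑ k, ∑ m, V i k m • (e i * e k * e m))
      = -(∑ i, ∑ k, ∑ m, V i k m • (e k * e i * e m)) := by
    have h0 : ∑ i, ∑ k, ∑ m, V i k m • ((if i = k then (2:ℝ) else 0) • e m) = 0 := by
      have : ∀ i, ∑ k, ∑ m, V i k m • ((if i = k then (2:ℝ) else 0) • e m)
          = ∑ m, V i i m • ((2:ℝ) • e m) := by
        intro i
        rw [Finset.sum_eq_single i]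
        · simp
        · intro k _ hk
          simp [Ne.symm hk]
        · simp
      simp_rw [this]
      rw [Finset.sum_comm]
      simp_rw [← Finset.sum_smul, ht]
      simp
    rw [← add_zero (-_), ← neg_zero, ← h0]
    simp only [← Finset.sum_neg_distrib, ← Finset.sum_add_distrib]
    refine Finset.sum_congr rfl fun i _ => Finset.sum_congr rfl fun k _ =>
      Finset.sum_congr rfl fun m _ => ?_
    rw [he i k, sub_mul, smul_mul_assoc, one_mul, neg_mul, smul_sub, smul_neg, sub_eq_add_neg]
  have hB : (∑ i, ∑ k, ∑ m, V i k m • (e k * e m * e i))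
      = -(∑ i, ∑ k, ∑ m, V i k m • (e k * e i * e m)) := by
    have h0 : ∑ i, ∑ k, ∑ m, V i k m • ((if m = i then (2:ℝ) else 0) • e k) = 0 := by
      have : ∀ i k, ∑ m, V i k m • ((if m = i then (2:ℝ) else 0) • e k)
          = V i k i • ((2:ℝ) • e k) := by
        intro i k
        rw [Finset.sum_eq_single i]
        · simp
        · intro m _ hk
          simp [hk]
        · simp
      simp_rw [this]
      rw [Finset.sum_comm]
      simp_rw [← Finset.sum_smul, ht2]
      simp
    rw [← add_zero (-_), ← neg_zero, ← h0]
    simp only [← Finset.sum_neg_distrib, ← Finset.sum_add_distrib]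
    refine Finset.sum_congr rfl fun i _ => Finset.sum_congr rfl fun k _ =>
      Finset.sum_congr rfl fun m _ => ?_
    rw [mul_assoc, he m i, mul_sub, mul_smul_comm, mul_one, mul_neg, smul_sub, smul_neg,
      sub_eq_add_neg, mul_assoc]
  have hC : (∑ i, ∑ k, ∑ m, V i k m • (e m * e i * e k))
      = -(∑ i, ∑ k, ∑ m, V i k m • (e k * e i * e m)) := by
    simp only [← Finset.sum_neg_distrib]
    refine Finset.sum_congr rfl fun i _ => ?_
    rw [Finset.sum_comm]
    refine Finset.sum_congr rfl fun k _ => Finset.sum_congr rfl fun m _ => ?_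
    rw [ha i m k, neg_smul]
  have hB' : (∑ i, ∑ k, ∑ m, V i k m • (e k * e m * e i))
      = ∑ i, ∑ k, ∑ m, V m i k • (e i * e k * e m) := by
    rw [Finset.sum_comm]
    refine Finset.sum_congr rfl fun i _ => ?_
    rw [Finset.sum_comm]
  have hC' : (∑ i, ∑ k, ∑ m, V i k m • (e m * e i * e k))
      = ∑ i, ∑ k, ∑ m, V k m i • (e i * e k * e m) := by
    symm
    rw [Finset.sum_comm]
    refine Finset.sum_congr rfl fun i _ => ?_
    rw [Finset.sum_comm]
  have hs : (∑ i, ∑ k, ∑ m, V i k m • (e i * e k * e m))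
      + (∑ i, ∑ k, ∑ m, V i k m • (e m * e i * e k))
      + (∑ i, ∑ k, ∑ m, V i k m • (e k * e m * e i)) = 0 := by
    rw [hB', hC']
    simp only [← Finset.sum_add_distrib, ← add_smul, hb, zero_smul, Finset.sum_const_zero]
  rw [hA, hB, hC] at hs
  rw [hA, hB]
  generalize -(∑ i, ∑ k, ∑ m, V i k m • (e k * e i * e m)) = x at hs
  have h3 : (3:ℝ) • x = 0 := by
    rw [← hs]; module
  have : x = 0 := (smul_eq_zero.mp h3).resolve_left (by norm_num)
  exact ⟨this, this⟩


theorem weyl_clifford_contraction_zero (n : ℕ) (hn : 4 ≤ n)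
    (Q : QuadraticForm ℝ (Fin n → ℝ)) (hQ : ∀ x, Q x = -∑ i, x i ^ 2)
    (W : Fin n → Fin n → Fin n → Fin n → ℝ)
    (h1 : ∀ i j k l, W i j k l = -W j i k l)
    (h2 : ∀ i j k l, W i j k l = -W i j l k)
    (h3 : ∀ i j k l, W i j k l = W k l i j)
    (hBianchi : ∀ i j k l, W i j k l + W i k l j + W i l j k = 0)
    (htrace : ∀ i j, ∑ k, W k i k j = 0) :
    ∀ j : Fin n,
      (∑ i, ∑ k, ∑ m, W i j k m •
          (cliffordBasis Q i * cliffordBasis Q k * cliffordBasis Q m)) = 0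
      ∧ (∑ i, ∑ k, ∑ m, W i j k m •
          (cliffordBasis Q k * cliffordBasis Q m * cliffordBasis Q i)) = 0 := by
  intro j
  refine weyl_aux (cliffordBasis Q) ?_ (fun i k m => W i j k m) (fun i k m => h2 i j k m) ?_
    (fun m => htrace j m)
  · intro i k
    have h := CliffordAlgebra.ι_mul_ι_add_swap (Q := Q) (Pi.single i 1) (Pi.single k 1)
    have hp : QuadraticMap.polar Q (Pi.single i 1) (Pi.single k 1)
        = -(if i = k then (2:ℝ) else 0) := by
      have : ∀ x y, QuadraticMap.polar Q x y = -∑ l, 2 * (x l * y l) := by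
        intro x y
        simp only [QuadraticMap.polar, hQ, Pi.add_apply, ← Finset.sum_neg_distrib,
          ← Finset.sum_sub_distrib]
        exact Finset.sum_congr rfl fun l _ => by ring
      rw [this, Finset.sum_eq_single i]
      · by_cases hik : i = k
        · subst hik; simp
        · simp [hik]
      · intro l _ hl
        simp [hl]
      · simp
    rw [hp, Algebra.algebraMap_eq_smul_one, neg_smul] at h
    unfold cliffordBasis
    rw [eq_sub_of_add_eq h]
    abel
  · intro i k m
    have := hBianchi j i k m
    simp only [h1 _ j]
    linarith
end
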